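/- Let 𝔤 = 𝔤₁ ⊕ ⋯ ⊕ 𝔤_r be a finite-dimensional real Lie algebra that is the direct sum of ideals 𝔤₁, …, 𝔤_r, each of which is a simple Lie algebra with negative-definite Killing form, and let 𝔥 ⊆ 𝔤 be a nonzero Lie subalgebra. Then dim N(𝔤,𝔥) ≤ r − 1. -/

import Mathlib

/-- The space `N(𝔤,𝔥)` of invariant symmetric bilinear forms on a real Lie algebra `L`
vanishing identically on a subspace `p`. -/
noncomputable def NForms (L : Type*) [LieRing L] [LieAlgebra ℝ L] (p : Submodule ℝ L) :
    Submodule ℝ (L →ₗ[ℝ] L →ₗ[ℝ] ℝ) where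
  carrier := {B | (∀ x y z : L, B ⁅x, y⁆ z = B x ⁅y, z⁆) ∧ (∀ x y : L, B x y = B y x) ∧
    ∀ x ∈ p, ∀ y ∈ p, B x y = 0}
  add_mem' := by
    rintro B C ⟨hB1, hB2, hB3⟩ ⟨hC1, hC2, hC3⟩
    exact ⟨fun x y z => by simp [hB1 x y z, hC1 x y z],
      fun x y => by simp [hB2 x y, hC2 x y],
      fun x hx y hy => by simp [hB3 x hx y hy, hC3 x hx y hy]⟩
  zero_mem' := ⟨fun _ _ _ => by simp, fun _ _ => by simp, fun _ _ _ _ => by simp⟩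
  smul_mem' := by
    rintro c B ⟨h1, h2, h3⟩
    exact ⟨fun x y z => by simp [h1 x y z], fun x y => by simp [h2 x y],
      fun x hx y hy => by simp [h3 x hx y hy]⟩


theorem aux_eig {V : Type*} [AddCommGroup V] [Module ℝ V] [FiniteDimensional ℝ V] [Nontrivial V]
    (P B : V →ₗ[ℝ] V →ₗ[ℝ] ℝ) (hPs : ∀ x y, P x y = P y x) (hP : ∀ x, x ≠ 0 → 0 < P x x)
    (hB : ∀ x y, B x y = B y x) : ∃ c : ℝ, ∃ v, v ≠ 0 ∧ ∀ w, B v w = c * P v w := by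
  have hinj : Function.Injective P := by
    rw [← LinearMap.ker_eq_bot, LinearMap.ker_eq_bot']
    intro m hm
    by_contra hne
    have := hP m hne
    simp [hm] at this
  let e : V ≃ₗ[ℝ] (V →ₗ[ℝ] ℝ) := LinearEquiv.ofInjectiveOfFinrankEq P hinj
    (Subspace.dual_finrank_eq (K := ℝ) (V := V)).symm
  have he : ∀ x, e x = P x := fun x => rfl
  let T : V →ₗ[ℝ] V := e.symm.toLinearMap ∘ₗ B
  have hT : ∀ x y, P (T x) y = B x y := by
    intro x y
    rw [← he]
    simp [T]
  let core : InnerProductSpace.Core ℝ V :=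
    { inner := fun x y => P x y
      conj_inner_symm := fun x y => by simpa using hPs y x
      re_inner_nonneg := fun x => by
        by_cases hx : x = 0
        · simp [hx]
        · simpa using (hP x hx).le
      add_left := fun x y z => by simp
      smul_left := fun x y z => by simp
      definite := fun x hx => by
        by_contra hne
        exact (hP x hne).ne' hx }
  let _ : NormedAddCommGroup V := core.toNormedAddCommGroup
  let _ : InnerProductSpace ℝ V := InnerProductSpace.ofCore core.toCore
  have hin : ∀ x y : V, inner ℝ x y = P x y := fun x y => rfl
  have hsym : T.IsSymmetric := by
    intro x y
    rw [hin, hin, hT, hPs, hT, hB]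
  obtain ⟨v, hv⟩ := hsym.hasEigenvalue_iSup_of_finiteDimensional.exists_hasEigenvector
  generalize (⨆ x : { x : V // x ≠ 0 }, RCLike.re (inner ℝ (T ↑x) (x : V)) / ‖(x : V)‖ ^ 2) = c at hv
  refine ⟨c, v, hv.2, fun w => ?_⟩
  rw [← hT, hv.apply_eq_smul]
  simp only [map_smul, LinearMap.smul_apply, smul_eq_mul]
  rfl

theorem aux_ideal {L : Type*} [LieRing L] [LieAlgebra ℝ L] (I J : LieIdeal ℝ L)
    (hI : LieAlgebra.IsSimple ℝ I) (C : L →ₗ[ℝ] L →ₗ[ℝ] ℝ)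
    (hC : ∀ x y z : L, C ⁅x, y⁆ z = C x ⁅y, z⁆)
    (hex : ∃ a ∈ I, a ≠ 0 ∧ ∀ y ∈ J, C a y = 0) : ∀ a ∈ I, ∀ y ∈ J, C a y = 0 := by
  let K : LieIdeal ℝ I :=
    { carrier := {a : I | ∀ y ∈ J, C a y = 0}
      add_mem' := by
        intro a b ha hb y hy
        simp [ha y hy, hb y hy]
      zero_mem' := by
        intro y hy
        simp
      smul_mem' := by
        intro c a ha y hy
        simp [ha y hy]
      lie_mem := by
        intro x a ha y hy
        change C ⁅(x : L), (a : L)⁆ y = 0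
        rw [← lie_skew, map_neg, LinearMap.neg_apply, hC, ha _ (lie_mem_right ℝ L J _ _ hy),
          neg_zero] }
  have hK : ∀ a : I, a ∈ K ↔ ∀ y ∈ J, C a y = 0 := fun a => Iff.rfl
  obtain ⟨a, haI, ha0, ha⟩ := hex
  rcases hI.eq_bot_or_eq_top K with h | h
  · exfalso
    have : (⟨a, haI⟩ : I) ∈ K := ha
    rw [h, LieSubmodule.mem_bot] at this
    exact ha0 (congrArg Subtype.val this)
  · intro b hb
    have : (⟨b, hb⟩ : I) ∈ K := by rw [h]; exact LieSubmodule.mem_top _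
    exact this

theorem aux_bracket {L : Type*} [LieRing L] [LieAlgebra ℝ L] (I : LieIdeal ℝ L)
    (hI : LieAlgebra.IsSimple ℝ I) : ∃ a ∈ I, ∃ b ∈ I, ⁅a, b⁆ ≠ 0 := by
  by_contra hcon
  push Not at hcon
  apply hI.non_abelian
  refine ⟨fun a b => ?_⟩
  ext
  exact hcon a a.2 b b.2

theorem aux_orth {L : Type*} [LieRing L] [LieAlgebra ℝ L] (I J : LieIdeal ℝ L)
    (hI : LieAlgebra.IsSimple ℝ I) (C : L →ₗ[ℝ] L →ₗ[ℝ] ℝ)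
    (hC : ∀ x y z : L, C ⁅x, y⁆ z = C x ⁅y, z⁆)
    (hIJ : ∀ x ∈ I, x ∈ J → x = 0) : ∀ a ∈ I, ∀ y ∈ J, C a y = 0 := by
  apply aux_ideal I J hI C hC
  obtain ⟨a, ha, b, hb, hab⟩ := aux_bracket I hI
  refine ⟨⁅a, b⁆, lie_mem_right ℝ L I _ _ hb, hab, fun y hy => ?_⟩
  rw [hC, hIJ ⁅b, y⁆ (lie_mem_left ℝ L I _ _ hb) (lie_mem_right ℝ L J _ _ hy), map_zero]

theorem aux_scalar {L : Type*} [LieRing L] [LieAlgebra ℝ L] [FiniteDimensional ℝ L]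
    (I : LieIdeal ℝ L) (hI : LieAlgebra.IsSimple ℝ I)
    (hneg : ∀ x ∈ I, x ≠ 0 → killingForm ℝ L x x < 0) (B : L →ₗ[ℝ] L →ₗ[ℝ] ℝ)
    (hB : ∀ x y z : L, B ⁅x, y⁆ z = B x ⁅y, z⁆) (hBs : ∀ x y : L, B x y = B y x) :
    ∃ c : ℝ, ∀ x ∈ I, ∀ y ∈ I, B x y = c * killingForm ℝ L x y := by
  obtain ⟨a, ha, b, hb, hab⟩ := aux_bracket I hI
  have : Nontrivial I := ⟨⟨a, ha⟩, 0, fun h => hab (by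
    have : a = 0 := congrArg Subtype.val h
    simp [this])⟩
  let i : I →ₗ[ℝ] L := (LieSubmodule.toSubmodule I).subtype
  have hi : ∀ x : I, i x = x := fun x => rfl
  obtain ⟨c, v, hv, hvw⟩ := aux_eig (V := I) (-(killingForm ℝ L).compl₁₂ i i) (B.compl₁₂ i i)
    (fun x y => by
      simp only [LinearMap.neg_apply, LinearMap.compl₁₂_apply]
      rw [LieModule.traceForm_comm])
    (fun x hx => by
      have := hneg x x.2 (fun h => hx (Subtype.ext h))
      simpa only [LinearMap.neg_apply, LinearMap.compl₁₂_apply, hi, Left.neg_pos_iff] using this)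
    (fun x y => hBs _ _)
  have key := aux_ideal I I hI (B + c • killingForm ℝ L)
    (fun x y z => by
      simp only [LinearMap.add_apply, LinearMap.smul_apply]
      rw [hB, LieModule.traceForm_apply_lie_apply])
    ⟨v, v.2, fun h => hv (Subtype.ext h), fun y hy => by
      have := hvw ⟨y, hy⟩
      simp only [LinearMap.neg_apply, LinearMap.compl₁₂_apply, hi] at this
      simp only [LinearMap.add_apply, LinearMap.smul_apply, smul_eq_mul]
      linarith⟩
  refine ⟨-c, fun x hx y hy => ?_⟩
  have := key x hx y hy
  simp only [LinearMap.add_apply, LinearMap.smul_apply, smul_eq_mul] at this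
  linarith

/-- Let `𝔤 = 𝔤₁ ⊕ ⋯ ⊕ 𝔤ᵣ` be a direct sum of ideals, each a simple Lie
algebra with negative-definite Killing form, and let `𝔥 ⊆ 𝔤` be a nonzero Lie subalgebra.
Then `dim N(𝔤,𝔥) ≤ r − 1`. -/
theorem stmt12 {L : Type*} [LieRing L] [LieAlgebra ℝ L] [FiniteDimensional ℝ L]
    (r : ℕ) (g : Fin r → LieIdeal ℝ L)
    (hsimple : ∀ i, LieAlgebra.IsSimple ℝ ↥(g i))
    (hneg : ∀ i, ∀ x ∈ g i, x ≠ 0 → killingForm ℝ L x x < 0)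
    (hsup : (⨆ i, (LieSubmodule.toSubmodule (g i) : Submodule ℝ L)) = ⊤)
    (hindep : iSupIndep (fun i => (LieSubmodule.toSubmodule (g i) : Submodule ℝ L)))
    (h : LieSubalgebra ℝ L) (hne : h ≠ ⊥) :
    Module.finrank ℝ ↥(NForms L h.toSubmodule) ≤ r - 1 := by
  classical
  have hdisj : ∀ i j, i ≠ j → ∀ x ∈ g i, x ∈ g j → x = 0 := by
    intro i j hij x hi hj
    exact Submodule.disjoint_def.mp (hindep.pairwiseDisjoint hij) x hi hj
  have hdec : ∀ x : L, ∃ f : Fin r → L, (∀ i, f i ∈ g i) ∧ ∑ i, f i = x := by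
    intro x
    have hx : x ∈ ⨆ i ∈ (Finset.univ : Finset (Fin r)),
        (LieSubmodule.toSubmodule (g i) : Submodule ℝ L) := by
      simp [hsup]
    obtain ⟨μ, hμ⟩ := (Submodule.mem_iSup_finset_iff_exists_sum _ _).mp hx
    exact ⟨fun i => μ i, fun i => (μ i).2, hμ⟩
  obtain ⟨x, hxh, hx0⟩ : ∃ x ∈ h, x ≠ 0 := by
    by_contra hcon
    push Not at hcon
    exact hne ((LieSubalgebra.eq_bot_iff _).mpr hcon)
  obtain ⟨f, hf, hfx⟩ := hdec x
  obtain ⟨j, hj⟩ : ∃ j, f j ≠ 0 := by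
    by_contra hcon
    push Not at hcon
    exact hx0 (by rw [← hfx]; simp [hcon])
  have hee : ∀ i, ∃ e ∈ g i, e ≠ 0 := by
    intro i
    obtain ⟨a, ha, b, hb, hab⟩ := aux_bracket (g i) (hsimple i)
    exact ⟨⁅a, b⁆, lie_mem_right ℝ L (g i) _ _ hb, hab⟩
  choose e heg he0 using hee
  let φ : ↥(NForms L h.toSubmodule) →ₗ[ℝ] ({i : Fin r // i ≠ j} → ℝ) :=
    { toFun := fun B i => B.1 (e i) (e i)
      map_add' := fun B C => by ext i; simp
      map_smul' := fun c B => by ext i; simp }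
  have hmain : ∀ B ∈ NForms L h.toSubmodule, (∀ i, i ≠ j → B (e i) (e i) = 0) →
      ∀ a b, B a b = 0 := by
    rintro B ⟨hB1, hB2, hB3⟩ hBi
    have horth : ∀ i k, i ≠ k → ∀ a ∈ g i, ∀ y ∈ g k, B a y = 0 := fun i k hik =>
      aux_orth (g i) (g k) (hsimple i) B hB1 (hdisj i k hik)
    choose c hc using fun i => aux_scalar (g i) (hsimple i) (hneg i) B hB1 hB2
    have hci : ∀ i, i ≠ j → c i = 0 := by
      intro i hi
      have h1 := hBi i hi
      rw [hc i _ (heg i) _ (heg i)] at h1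
      exact (mul_eq_zero.mp h1).resolve_right (hneg i _ (heg i) (he0 i)).ne
    have hexp : ∀ u v : Fin r → L, (∀ i, u i ∈ g i) → (∀ i, v i ∈ g i) →
        B (∑ i, u i) (∑ i, v i) = c j * killingForm ℝ L (u j) (v j) := by
      intro u v hu hv
      rw [map_sum B, LinearMap.sum_apply, Finset.sum_eq_single j]
      · rw [map_sum, Finset.sum_eq_single j]
        · exact hc j _ (hu j) _ (hv j)
        · intro k _ hk
          exact horth j k hk.symm _ (hu j) _ (hv k)
        · simp
      · intro i _ hi
        rw [map_sum]
        refine Finset.sum_eq_zero fun k _ => ?_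
        by_cases hik : i = k
        · subst hik
          rw [hc i _ (hu i) _ (hv i), hci i hi, zero_mul]
        · exact horth i k hik _ (hu i) _ (hv k)
      · simp
    have hcj : c j = 0 := by
      have h1 := hB3 x hxh x hxh
      rw [← hfx, hexp f f hf hf] at h1
      exact (mul_eq_zero.mp h1).resolve_right (hneg j _ (hf j) hj).ne
    intro a b
    obtain ⟨u, hu, rfl⟩ := hdec a
    obtain ⟨v, hv, rfl⟩ := hdec b
    rw [hexp u v hu hv, hcj, zero_mul]
  have hφ : Function.Injective φ := by
    intro B C hBC
    have hi : ∀ i, i ≠ j → B.1 (e i) (e i) = C.1 (e i) (e i) := fun i hi => congrFun hBC ⟨i, hi⟩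
    have h0 := hmain (B.1 + (-1 : ℝ) • C.1)
      (Submodule.add_mem _ B.2 (Submodule.smul_mem _ _ C.2))
      (fun i hij => by simp [hi i hij])
    apply Subtype.ext
    refine LinearMap.ext fun a => LinearMap.ext fun b => ?_
    have h1 := h0 a b
    simp only [LinearMap.add_apply, LinearMap.smul_apply, smul_eq_mul] at h1
    linarith
  have := LinearMap.finrank_le_finrank_of_injective hφ
  simpa [Fintype.card_subtype_compl] using this
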